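/- arXiv:1111.0478 — 2 statements merged into one kernel-verified Lean document; each statement's English description precedes it below -/
import Mathlib

section
/- Let 0 < x < 1 and let α > 0 be real. Set y = x·exp(−2α²) (so 0 < y < 1), A = Σ_{n=1}^∞ √n·yⁿ, B = Σ_{n=1}^∞ √n·xⁿ, c = α(1 − x)/x, and k = exp(−2α²)(1 − x)/(1 − x·exp(−2α²)). Define s = (1/8)·[ 2α²/(1 − x) − (c·A)² − 2k·(c·A)(c·B) − 2(c·B)² − (α²/(1 − x))·k² ] and s' = (α²/8)·[ 2x/(1 − x) − ((1 − x)/(1 − x·exp(−2α²)))²·exp(−4α²)·(3 + 1/(1 − x)) ]. Then s < s'. (Hence s' < 0 is a sufficient criterion for the negativity of the Shchukin–Vogel determinant s, and thus for witnessing entanglement in the truly hybrid entangled state Σₙ pₙ |ψₙ⟩⟨ψₙ| with pₙ = (1−x)xⁿ⁻¹... pₙ = ((1−x)/x)xⁿ and ψₙ = (|0⟩|√n α⟩ + |1⟩|−√n α⟩)/√2.) -/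
theorem aux_bound (t : ℝ) (h0 : 0 < t) (h1 : t < 1) :
    t / (1 - t) < ∑' n : ℕ, Real.sqrt n * t ^ n := by
  have hS : Summable (fun n : ℕ => Real.sqrt n * t ^ n) := by
    have h := summable_pow_mul_geometric_of_norm_lt_one (R := ℝ) 1 (r := t)
      (by rw [Real.norm_eq_abs, abs_of_pos h0]; exact h1)
    refine Summable.of_nonneg_of_le (fun n => by positivity) (fun n => ?_) h
    have : Real.sqrt n ≤ (n : ℝ) ^ 1 := by
      rw [pow_one, Real.sqrt_le_left (by positivity)]
      have : n ≤ n ^ 2 := Nat.le_self_pow (by norm_num) n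
      exact_mod_cast this
    gcongr
  rw [hS.tsum_eq_zero_add]
  have hS' := (summable_nat_add_iff 1).2 hS
  have hg : HasSum (fun n : ℕ => t * t ^ n) (t * (1 - t)⁻¹) :=
    (hasSum_geometric_of_lt_one h0.le h1).mul_left t
  rw [div_eq_mul_inv, ← hg.tsum_eq]
  simp only [Nat.cast_zero, Real.sqrt_zero, zero_mul, zero_add]
  refine Summable.tsum_lt_tsum (i := 1) (fun n => ?_) ?_ hg.summable hS'
  · have : 1 ≤ Real.sqrt ((n + 1 : ℕ) : ℝ) := by
      rw [Real.one_le_sqrt]; push_cast; linarith [(Nat.cast_nonneg n : (0 : ℝ) ≤ n)]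
    have hp : 0 < t ^ (n + 1) := by positivity
    calc t * t ^ n = 1 * t ^ (n + 1) := by ring
      _ ≤ _ := by gcongr
  · have : 1 < Real.sqrt ((1 + 1 : ℕ) : ℝ) := by
      rw [Real.lt_sqrt (by norm_num)]; norm_num
    calc t * t ^ 1 = 1 * t ^ (1 + 1) := by ring
      _ < _ := by gcongr

/-- The lower-bound substitution for the Shchukin–Vogel determinant of the truly hybrid
entangled state `Σₙ pₙ |ψₙ⟩⟨ψₙ|` with `pₙ = ((1−x)/x)xⁿ` and
`ψₙ = (|0⟩|√n α⟩ + |1⟩|−√n α⟩)/√2`: replacing the series `A = Σ√n yⁿ` (with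
`y = x e^{−2α²}`) and `B = Σ√n xⁿ` by their strict lower bounds yields `s'` with
`s < s'`; hence `s' < 0` is a sufficient criterion for entanglement detection. -/
theorem SV_determinant_lower_bound_substitution
    (x α : ℝ) (hx₀ : 0 < x) (hx₁ : x < 1) (hα : 0 < α)
    (y : ℝ) (hy : y = x * Real.exp (-2 * α ^ 2))
    (A : ℝ) (hA : A = ∑' n : ℕ, Real.sqrt n * y ^ n)
    (B : ℝ) (hB : B = ∑' n : ℕ, Real.sqrt n * x ^ n)
    (c : ℝ) (hc : c = α * (1 - x) / x)
    (k : ℝ) (hk : k = Real.exp (-2 * α ^ 2) * (1 - x) / (1 - x * Real.exp (-2 * α ^ 2)))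
    (s : ℝ) (hs : s = (1 / 8) * (2 * α ^ 2 / (1 - x) - (c * A) ^ 2
      - 2 * k * (c * A) * (c * B) - 2 * (c * B) ^ 2 - (α ^ 2 / (1 - x)) * k ^ 2))
    (s' : ℝ) (hs' : s' = (α ^ 2 / 8) * (2 * x / (1 - x)
      - ((1 - x) / (1 - x * Real.exp (-2 * α ^ 2))) ^ 2 * Real.exp (-4 * α ^ 2)
        * (3 + 1 / (1 - x)))) :
    s < s' := by
  have he : Real.exp (-4 * α ^ 2) = Real.exp (-2 * α ^ 2) ^ 2 := by
    rw [← Real.exp_nat_mul]; congr 1; push_cast; ring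
  have he0 : 0 < Real.exp (-2 * α ^ 2) := Real.exp_pos _
  have he1 : Real.exp (-2 * α ^ 2) < 1 := by
    rw [Real.exp_lt_one_iff]; nlinarith [pow_pos hα 2]
  rw [he] at hs'
  generalize Real.exp (-2 * α ^ 2) = e at *
  have hy0 : 0 < y := by rw [hy]; positivity
  have hy1 : y < 1 := by rw [hy]; nlinarith
  have hA' := aux_bound y hy0 hy1
  have hB' := aux_bound x hx₀ hx₁
  rw [← hA] at hA'
  rw [← hB] at hB'
  have h1x : 0 < 1 - x := by linarith
  have h1y : 0 < 1 - x * e := by rw [← hy]; linarith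
  have hc0 : 0 < c := by rw [hc]; positivity
  have hk0 : 0 < k := by rw [hk]; positivity
  have h1 : α * k < c * A := by
    have : c * (y / (1 - y)) = α * k := by
      rw [hc, hk, hy]; field_simp
    rw [← this]; gcongr
  have h2 : α < c * B := by
    have : c * (x / (1 - x)) = α := by
      rw [hc]; field_simp
    calc α = c * (x / (1 - x)) := this.symm
      _ < _ := by gcongr
  have hs2 : s' = (1 / 8) * (2 * α ^ 2 / (1 - x) - (α * k) ^ 2
      - 2 * k * (α * k) * α - 2 * α ^ 2 - (α ^ 2 / (1 - x)) * k ^ 2) := by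
    rw [hs', hk]; field_simp; ring
  have h3 : (α * k) ^ 2 < (c * A) ^ 2 := by gcongr
  have h4 : α ^ 2 < (c * B) ^ 2 := by gcongr
  have h5 : 2 * k * (α * k) * α < 2 * k * (c * A) * (c * B) := by gcongr
  rw [hs, hs2]
  linarith
end

section
/- The function f(t) = t/(2·exp(t) − 1) on (0, ∞) attains a strict global maximum at a unique point t* ∈ (0, 1), and t* is the unique positive solution of 2·exp(t)·(1 − t) = 1. (Consequently, the optimal coherent-state amplitude α_opt = √(t*)/2 ≈ 0.44 maximizing the witnessing bound 4ηα²/((1−η)(2e^{4α²} − 1)) is independent of the channel transmissivity η.) -/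
theorem SV_aux (s t : ℝ) (h : 2 * Real.exp s * (1 - s) = 1) (hne : t ≠ s) :
    2 * Real.exp s * t < 2 * Real.exp t - 1 := by
  have h1 : (t - s) + 1 < Real.exp (t - s) := Real.add_one_lt_exp (sub_ne_zero.mpr hne)
  have h2 : Real.exp t = Real.exp s * Real.exp (t - s) := by
    rw [← Real.exp_add]; congr 1; ring
  have h3 := mul_lt_mul_of_pos_left h1 (Real.exp_pos s)
  rw [← h2] at h3
  nlinarith

/-- The function `f(t) = t/(2eᵗ − 1)` on `(0, ∞)` attains a strict global maximum at a
unique point `t* ∈ (0, 1)`, which is the unique positive solution of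
`2eᵗ(1 − t) = 1`. Consequently the optimal amplitude `α_opt = √(t*)/2` for the
Shchukin–Vogel witness is independent of the channel transmissivity. -/
theorem SV_witness_optimal_amplitude :
    ∃ t0 : ℝ, 0 < t0 ∧ t0 < 1 ∧
      (∀ t : ℝ, 0 < t → t ≠ t0 →
        t / (2 * Real.exp t - 1) < t0 / (2 * Real.exp t0 - 1)) ∧
      2 * Real.exp t0 * (1 - t0) = 1 ∧
      (∀ t : ℝ, 0 < t → 2 * Real.exp t * (1 - t) = 1 → t = t0) := by
  obtain ⟨s, ⟨hs0, hs1⟩, hs⟩ : ∃ s ∈ Set.Ioo (0 : ℝ) 1, 2 * Real.exp s * (1 - s) = 1 := by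
    have hc : ContinuousOn (fun s : ℝ => 2 * Real.exp s * (1 - s)) (Set.Icc 0 1) := by
      fun_prop
    have := intermediate_value_Ioo' (zero_le_one' ℝ) hc
    exact this ⟨by norm_num, by norm_num⟩
  refine ⟨s, hs0, hs1, ?_, hs, ?_⟩
  · intro t ht hne
    have h1 := SV_aux s t hs hne
    have hE := Real.exp_pos s
    have hpos : 0 < 2 * Real.exp s * t := by positivity
    have hd : 2 * Real.exp s - 1 = 2 * Real.exp s * s := by linarith
    rw [hd, div_lt_div_iff₀ (by linarith) (by positivity)]
    nlinarith
  · intro t ht h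
    by_contra hne
    have h1 := SV_aux s t hs hne
    have h2 := SV_aux t s h (Ne.symm hne)
    have h3 : Real.exp s < Real.exp t := by
      by_contra hh
      nlinarith [not_lt.mp hh]
    nlinarith
end
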